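/- There exists a real constant C such that for all m ≥ 1, |log₂ maxocc((01)^m) − (m·log₂((3 + √5)/2) − (1/2)·log₂ m)| ≤ C; that is, the subword entropy of (01)^m equals m·log₂((3+√5)/2) − (1/2)·log₂ m + O(1) as m → ∞. -/

import Mathlib

open List Real

/-- `occ w u` is the number of occurrences of `u` as a subword (subsequence) of `w`,
i.e. the multiplicity of `u` among the `2^|w|` sublists of `w`. -/
def occ {α : Type*} [DecidableEq α] (w u : List α) : ℕ := w.sublists.count u

/-- `maxocc w` is the maximal number of occurrences of any subword of `w`. -/
noncomputable def maxocc {α : Type*} [DecidableEq α] (w : List α) : ℕ :=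
  sSup {n : ℕ | ∃ u : List α, occ w u = n}

/-- `rep v m` is the concatenation of `m` copies of the word `v`. -/
def rep {α : Type*} (v : List α) (m : ℕ) : List α := (List.replicate m v).flatten

/-!
A word of length `k` occurs at most `C(⌊(L + k) / 2⌋, k)` times in an alternating word of length
`L`, by Pascal's rule, and the alternating word of length `k` with the same last letter attains this
bound. So `maxocc` of the alternating word is the largest of these binomial coefficients over `k`.

Put `n = ⌊(L + k) / 2⌋`. Since `1 - φ⁻¹ = φ⁻²` for the golden ratio `φ`, the number `C(n, k)` is
`φ ^ (2 n - k)` times the probability that a binomial variable with parameters `n` and `φ⁻¹` equals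
`k`, and `2 n - k` is `L` or `L - 1`. The largest binomial probability has order `1 / √n`: the
probabilities stay comparable to the largest one on a window of length of order `√n` around the
mode, while by Chebyshev's inequality such a window carries most of the mass.

For the lower bound on `maxocc`, `k` has to be the mode for the `n` which itself depends on `k`;
this is a fixed point of a monotone map.
-/

open CoxeterSystem (alternatingWord alternatingWord_succ)
open scoped goldenRatio unitInterval

section Occurrences

variable {α : Type*} [DecidableEq α]

lemma occ_nil_right (w : List α) : occ w [] = 1 := by
  induction w using List.reverseRecOn with
  | nil => rfl
  | append_singleton w a ih =>
    rw [occ, List.sublists_concat, List.count_append, ← occ, ih, Nat.add_eq_left,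
      List.count_eq_zero]
    simp

lemma occ_nil_append_singleton (u : List α) (a : α) : occ [] (u ++ [a]) = 0 := by
  simp [occ]

lemma occ_append_singleton_self (w u : List α) (a : α) :
    occ (w ++ [a]) (u ++ [a]) = occ w (u ++ [a]) + occ w u := by
  simp only [occ, List.sublists_concat, List.count_append,
    List.count_map_of_injective _ _ (List.append_left_injective [a])]

lemma occ_append_singleton_of_ne {a b : α} (hab : a ≠ b) (w u : List α) :
    occ (w ++ [a]) (u ++ [b]) = occ w (u ++ [b]) := by
  rw [occ, List.sublists_concat, List.count_append, ← occ, Nat.add_eq_left, List.count_eq_zero]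
  simp [hab]

lemma isGreatest_maxocc (w : List α) : IsGreatest (Set.range (occ w)) (maxocc w) := by
  have hbdd : BddAbove (Set.range (occ w)) :=
    ⟨w.sublists.length, Set.forall_mem_range.2 fun _ => List.count_le_length⟩
  exact ⟨Nat.sSup_mem (Set.range_nonempty _) hbdd, fun _ => le_csSup hbdd⟩

end Occurrences

section AlternatingWords

variable {α : Type*} {a b : α}

lemma alternatingWord_succ_eq_append (a b : α) (L : ℕ) :
    alternatingWord a b (L + 1) = alternatingWord b a L ++ [b] := by
  rw [alternatingWord_succ, List.concat_eq_append]

lemma rep_eq_alternatingWord (a b : α) (m : ℕ) : rep [a, b] m = alternatingWord a b (2 * m) := by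
  induction m with
  | zero => rfl
  | succ m ih =>
    rw [Nat.mul_succ, alternatingWord_succ_eq_append, alternatingWord_succ_eq_append, ← ih, rep,
      rep, List.replicate_succ', List.flatten_concat, List.append_assoc, List.singleton_append]

variable [DecidableEq α]

lemma occ_alternatingWord_le (hab : a ≠ b) (L : ℕ) (u : List α) :
    occ (alternatingWord a b L) u ≤ ((L + u.length) / 2).choose u.length := by
  induction L using Nat.strong_induction_on generalizing a b u with
  | _ L ih =>
    obtain rfl | ⟨u, c, rfl⟩ := u.eq_nil_or_concat'
    · simp [occ_nil_right]
    match L with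
    | 0 => simp [alternatingWord, occ_nil_append_singleton]
    | L + 1 =>
      rw [alternatingWord_succ_eq_append]
      obtain rfl | hc := eq_or_ne b c
      · rw [occ_append_singleton_self, List.length_append, List.length_singleton,
          show (L + 1 + (u.length + 1)) / 2 = (L + u.length) / 2 + 1 by omega,
          Nat.choose_succ_succ', add_comm]
        gcongr
        · exact ih L (by omega) hab.symm u
        -- The last remaining letter is `a ≠ b`, so it can be dropped as well.
        · match L with
          | 0 => simp [alternatingWord, occ_nil_append_singleton]
          | L + 1 =>
            rw [alternatingWord_succ_eq_append, occ_append_singleton_of_ne hab]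
            simpa [add_assoc, add_comm 1] using ih L (by omega) hab (u ++ [b])
      · rw [occ_append_singleton_of_ne hc]
        exact (ih L (by omega) hab.symm _).trans (Nat.choose_le_choose _ (by omega))

lemma occ_alternatingWord_alternatingWord (hab : a ≠ b) (L k : ℕ) :
    occ (alternatingWord a b L) (alternatingWord a b k) = ((L + k) / 2).choose k := by
  induction L using Nat.strong_induction_on generalizing a b k with
  | _ L ih =>
    match k, L with
    | 0, _ => simp [alternatingWord, occ_nil_right]
    | k + 1, 0 =>
      rw [alternatingWord_succ_eq_append, alternatingWord, occ_nil_append_singleton,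
        Nat.choose_eq_zero_of_lt (by omega)]
    | k + 1, L + 1 =>
      rw [show (L + 1 + (k + 1)) / 2 = (L + k) / 2 + 1 by omega, Nat.choose_succ_succ',
        alternatingWord_succ_eq_append, alternatingWord_succ_eq_append, occ_append_singleton_self,
        ih L (by omega) hab.symm, add_comm, ← alternatingWord_succ_eq_append]
      congr 1
      match L with
      | 0 =>
        rw [alternatingWord_succ_eq_append, alternatingWord, occ_nil_append_singleton,
          Nat.choose_eq_zero_of_lt (by omega)]
      | L + 1 =>
        rw [alternatingWord_succ_eq_append b a L, alternatingWord_succ_eq_append a b k,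
          occ_append_singleton_of_ne hab, ← alternatingWord_succ_eq_append, ih L (by omega) hab,
          add_right_comm, add_assoc]

lemma isGreatest_maxocc_alternatingWord (hab : a ≠ b) (L : ℕ) :
    IsGreatest (Set.range fun k => ((L + k) / 2).choose k) (maxocc (alternatingWord a b L)) := by
  obtain ⟨⟨u, hu⟩, hmax⟩ := isGreatest_maxocc (alternatingWord a b L)
  have hge (k : ℕ) : ((L + k) / 2).choose k ≤ maxocc (alternatingWord a b L) :=
    hmax ⟨_, occ_alternatingWord_alternatingWord hab L k⟩
  exact ⟨⟨u.length, (hge _).antisymm (hu ▸ occ_alternatingWord_le hab L u)⟩,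
    Set.forall_mem_range.2 hge⟩

end AlternatingWords

section BinomialProbabilities

variable {n : ℕ} {p : I}

lemma bernstein_eq_zero_of_lt {k : ℕ} (hk : n < k) (p : I) : bernstein n k p = 0 := by
  simp [bernstein_apply, Nat.choose_eq_zero_of_lt hk]

lemma sum_range_bernstein (n : ℕ) (p : I) : ∑ k ∈ Finset.range (n + 1), bernstein n k p = 1 := by
  rw [Finset.sum_range, bernstein.probability]

lemma sum_bernstein_le_one (n : ℕ) (p : I) (s : Finset ℕ) : ∑ k ∈ s, bernstein n k p ≤ 1 := by
  rw [← sum_range_bernstein n p, ← Finset.sum_filter_ne_zero]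
  refine Finset.sum_le_sum_of_subset_of_nonneg (fun k hk => ?_) fun _ _ _ => bernstein_nonneg
  contrapose! hk
  simp [bernstein_eq_zero_of_lt (by simpa using hk) p]

lemma sum_range_bernstein_variance (n : ℕ) (p : I) :
    ∑ k ∈ Finset.range (n + 1), ((k : ℝ) - n * p) ^ 2 * bernstein n k p = n * (p * (1 - p)) := by
  obtain rfl | hn := eq_or_ne n 0
  · simp
  have hn' : (n : ℝ) ≠ 0 := Nat.cast_ne_zero.2 hn
  have hvar := congrArg ((n : ℝ) ^ 2 * ·) (bernstein.variance hn p)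
  simp only [bernstein.z, Finset.mul_sum] at hvar
  rw [Finset.sum_range]
  convert hvar using 1
  · refine Finset.sum_congr rfl fun k _ => ?_
    field_simp
    ring
  · field_simp

/-- The mode `⌊(n + 1) p⌋` of the binomial distribution with parameters `n` and `p`; its
probabilities are the values `bernstein n k p`. -/
noncomputable def binomialMode (n : ℕ) (p : I) : ℕ := ⌊((n : ℝ) + 1) * p⌋₊

lemma add_one_mul_mul_one_sub_nonneg (n : ℕ) (p : I) : 0 ≤ ((n : ℝ) + 1) * p * (1 - p) :=
  mul_nonneg (mul_nonneg (by positivity) p.2.1) (sub_nonneg.2 p.2.2)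

lemma binomialMode_mono (p : I) : Monotone (binomialMode · p) := fun _ _ h => by
  have := p.2.1
  dsimp only [binomialMode]
  gcongr

lemma binomialMode_le (n : ℕ) (hp : p < 1) : binomialMode n p ≤ n := by
  refine Nat.lt_succ_iff.1 ((Nat.floor_lt' n.succ_ne_zero).2 ?_)
  push_cast
  exact mul_lt_of_lt_one_right (by positivity) hp

/-- The ratio of consecutive probabilities, written so as to compare `k + 1` with `(n + 1) p`. -/
lemma bernstein_succ_mul (n k : ℕ) (p : I) :
    bernstein n (k + 1) p * ((k + 1) * (1 - p)) =
      bernstein n k p * ((k + 1) * (1 - p) - ((k + 1) - (n + 1) * p)) := by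
  obtain hk | hk := lt_or_ge k n
  · obtain ⟨d, rfl⟩ := Nat.exists_eq_add_of_lt hk
    have hchoose : ((k + d + 1).choose (k + 1) : ℝ) * (k + 1) = (k + d + 1).choose k * (d + 1) := by
      have := Nat.choose_succ_right_eq (k + d + 1) k
      rw [show k + d + 1 - k = d + 1 by omega] at this
      exact_mod_cast this
    rw [bernstein_apply, bernstein_apply, show k + d + 1 - (k + 1) = d by omega,
      show k + d + 1 - k = d + 1 by omega]
    push_cast
    linear_combination (p : ℝ) ^ (k + 1) * (1 - p) ^ (d + 1) * hchoose
  · rw [bernstein_eq_zero_of_lt (by omega)]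
    obtain rfl | hk := eq_or_lt_of_le hk
    · ring
    · rw [bernstein_eq_zero_of_lt hk, zero_mul, zero_mul]

lemma bernstein_le_succ {k : ℕ} (hp : p < 1) (hk : k + 1 ≤ binomialMode n p) :
    bernstein n k p ≤ bernstein n (k + 1) p := by
  have hk' : (k : ℝ) + 1 ≤ (n + 1) * p := by
    exact_mod_cast (Nat.le_floor_iff' k.succ_ne_zero).1 hk
  have hq : (0 : ℝ) < 1 - p := sub_pos.2 hp
  refine le_of_mul_le_mul_right ?_ (show 0 < ((k : ℝ) + 1) * (1 - p) by positivity)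
  rw [bernstein_succ_mul]
  gcongr
  linarith

lemma bernstein_succ_le {k : ℕ} (hp : p < 1) (hk : binomialMode n p ≤ k) :
    bernstein n (k + 1) p ≤ bernstein n k p := by
  have hk' : (n + 1) * (p : ℝ) < k + 1 := by
    exact_mod_cast (Nat.floor_lt' k.succ_ne_zero).1 (Nat.lt_succ_iff.2 hk)
  have hq : (0 : ℝ) < 1 - p := sub_pos.2 hp
  refine le_of_mul_le_mul_right ?_ (show 0 < ((k : ℝ) + 1) * (1 - p) by positivity)
  rw [bernstein_succ_mul]
  gcongr
  linarith

lemma bernstein_le_bernstein_binomialMode (hp : p < 1) (n k : ℕ) :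
    bernstein n k p ≤ bernstein n (binomialMode n p) p := by
  obtain hk | hk := le_total k (binomialMode n p)
  · induction hk using Nat.decreasingInduction with
    | self => exact le_rfl
    | of_succ k hk ih => exact (bernstein_le_succ hp hk).trans ih
  · induction k, hk using Nat.le_induction with
    | base => exact le_rfl
    | succ k hk ih => exact (bernstein_succ_le hp hk).trans ih

/-- Stated without division: `i` steps beyond the mode lose at most the fraction
`i ^ 2 / ((n + 1) p (1 - p))` of the largest probability. -/
lemma bernstein_binomialMode_add_ge (hp : p < 1) (n i : ℕ) :
    bernstein n (binomialMode n p) p * ((n + 1) * p * (1 - p) - i ^ 2) ≤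
      bernstein n (binomialMode n p + i) p * ((n + 1) * p * (1 - p)) := by
  set m := binomialMode n p
  set T : ℝ := (n + 1) * p
  have hq : (0 : ℝ) < 1 - p := sub_pos.2 hp
  induction i with
  | zero => simp
  | succ i ih =>
    have hstep : (bernstein n (m + i) p - bernstein n (m + i + 1) p) * (T * (1 - p)) ≤
        bernstein n m p * (i + 1) := by
      have hmT : (m : ℝ) ≤ T := Nat.floor_le (mul_nonneg (by positivity) p.2.1)
      have hTm : T < m + 1 := Nat.lt_floor_add_one T
      calc
        _ ≤ (bernstein n (m + i) p - bernstein n (m + i + 1) p) * ((m + i + 1) * (1 - p)) := by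
          gcongr
          · exact sub_nonneg.2 (bernstein_succ_le hp (by omega))
          · linarith [(i.cast_nonneg : (0 : ℝ) ≤ i)]
        _ = bernstein n (m + i) p * (m + i + 1 - T) := by
          have := bernstein_succ_mul n (m + i) p
          push_cast at this
          linear_combination -this
        _ ≤ bernstein n m p * (i + 1) := by
          gcongr
          · linarith [(i.cast_nonneg : (0 : ℝ) ≤ i)]
          · exact bernstein_le_bernstein_binomialMode hp n _
          · linarith
    have hextra : 0 ≤ bernstein n m p * i := by positivity
    push_cast
    rw [← add_assoc]
    linarith

/-- At least half a standard deviation's worth of values beyond the mode have probability at least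
`3 / 4` of the largest one, and all probabilities sum to `1`. -/
lemma bernstein_mul_sqrt_le (hp : p < 1) (n k : ℕ) :
    bernstein n k p * √((n + 1) * p * (1 - p)) ≤ 3 := by
  refine (mul_le_mul_of_nonneg_right (bernstein_le_bernstein_binomialMode hp n k)
    (Real.sqrt_nonneg _)).trans ?_
  set sd := √((n + 1) * p * (1 - p)) with hsd
  set M := bernstein n (binomialMode n p) p
  have hsd_sq : sd ^ 2 = (n + 1) * p * (1 - p) := by
    rw [hsd, Real.sq_sqrt (add_one_mul_mul_one_sub_nonneg n p)]
  obtain hsd_zero | hsd_pos := (show 0 ≤ sd from Real.sqrt_nonneg _).eq_or_lt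
  · simp [← hsd_zero]
  have hwindow : ∀ i ∈ Finset.range (⌊sd / 2⌋₊ + 1),
      3 / 4 * M ≤ bernstein n (binomialMode n p + i) p := by
    intro i hi
    have hi_le : (i : ℝ) ≤ sd / 2 :=
      (Nat.le_floor_iff (by positivity)).1 (Finset.mem_range_succ_iff.1 hi)
    refine le_of_mul_le_mul_right ?_ (pow_pos hsd_pos 2)
    calc 3 / 4 * M * sd ^ 2 = M * (sd ^ 2 - (sd / 2) ^ 2) := by ring
      _ ≤ M * (sd ^ 2 - i ^ 2) := by gcongr
      _ ≤ _ := by rw [hsd_sq]; exact bernstein_binomialMode_add_ge hp n i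
  have hsum : (⌊sd / 2⌋₊ + 1) * (3 / 4 * M) ≤ 1 := by
    calc (⌊sd / 2⌋₊ + 1) * (3 / 4 * M)
        = ∑ _i ∈ Finset.range (⌊sd / 2⌋₊ + 1), 3 / 4 * M := by simp
      _ ≤ ∑ i ∈ Finset.range (⌊sd / 2⌋₊ + 1), bernstein n (binomialMode n p + i) p :=
        Finset.sum_le_sum hwindow
      _ = ∑ k ∈ (Finset.range (⌊sd / 2⌋₊ + 1)).map (addLeftEmbedding (binomialMode n p)),
          bernstein n k p := by simp [Finset.sum_map]
      _ ≤ 1 := sum_bernstein_le_one n p _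
  have : 0 ≤ M := bernstein_nonneg
  calc M * sd = 8 / 3 * (sd / 2 * (3 / 4 * M)) := by ring
    _ ≤ 8 / 3 * ((⌊sd / 2⌋₊ + 1) * (3 / 4 * M)) := by gcongr; exact (Nat.lt_floor_add_one _).le
    _ ≤ 3 := by linarith

lemma card_le_of_forall_abs_sub_le {s : Finset ℕ} {c r : ℝ} (hr : 0 ≤ r)
    (hs : ∀ k ∈ s, |(k : ℝ) - c| ≤ r) : (s.card : ℝ) ≤ 2 * r + 1 := by
  obtain rfl | hne := s.eq_empty_or_nonempty
  · rw [Finset.card_empty, Nat.cast_zero]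
    positivity
  have hmax := abs_le.1 (hs _ (s.max'_mem hne))
  have hmin := abs_le.1 (hs _ (s.min'_mem hne))
  have hcard : s.card ≤ s.max' hne + 1 - s.min' hne := by
    rw [← Nat.card_Icc]
    exact Finset.card_le_card fun k hk => Finset.mem_Icc.2 ⟨s.min'_le k hk, s.le_max' k hk⟩
  have hcard' : s.card + s.min' hne ≤ s.max' hne + 1 := by
    have := s.min'_le_max' hne
    omega
  have : (s.card : ℝ) + s.min' hne ≤ s.max' hne + 1 := by exact_mod_cast hcard'
  linarith

/-- Chebyshev's inequality, with the variance `n p (1 - p)` bounded by `(n + 1) / 4`. -/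
lemma sum_bernstein_far_le (n : ℕ) (p : I) :
    ∑ k ∈ Finset.range (n + 1) with n + 1 < ((k : ℕ) - n * p : ℝ) ^ 2, bernstein n k p ≤ 1 / 4 := by
  have hpos : (0 : ℝ) < n + 1 := by positivity
  refine le_of_mul_le_mul_left ?_ hpos
  calc
    _ ≤ ∑ k ∈ Finset.range (n + 1) with n + 1 < ((k : ℕ) - n * p : ℝ) ^ 2,
        ((k : ℝ) - n * p) ^ 2 * bernstein n k p := by
      rw [Finset.mul_sum]
      gcongr with k hk
      exact (Finset.mem_filter.1 hk).2.le
    _ ≤ ∑ k ∈ Finset.range (n + 1), ((k : ℝ) - n * p) ^ 2 * bernstein n k p :=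
      Finset.sum_le_sum_of_subset_of_nonneg (Finset.filter_subset _ _) fun _ _ _ => by positivity
    _ = n * (p * (1 - p)) := sum_range_bernstein_variance n p
    _ ≤ n * (1 / 4) := by
      gcongr
      linarith [sq_nonneg ((p : ℝ) - 1 / 2)]
    _ ≤ (n + 1) * (1 / 4) := by gcongr; linarith

lemma one_le_mul_sqrt_of_forall_bernstein_le {M : ℝ} (hM : ∀ k, bernstein n k p ≤ M) :
    1 ≤ 4 * (M * √(n + 1)) := by
  have hM0 : 0 ≤ M := bernstein_nonneg.trans (hM 0)
  have hsqrt : 1 ≤ √((n : ℝ) + 1) := Real.one_le_sqrt.2 (by simp)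
  set near := {k ∈ Finset.range (n + 1) | ¬ n + 1 < ((k : ℕ) - n * p : ℝ) ^ 2}
  have hcard : (near.card : ℝ) ≤ 2 * √(n + 1) + 1 :=
    card_le_of_forall_abs_sub_le (Real.sqrt_nonneg _) fun k hk =>
      Real.abs_le_sqrt (not_lt.1 (Finset.mem_filter.1 hk).2)
  have hsum_near : ∑ k ∈ near, bernstein n k p ≤ 3 * (M * √(n + 1)) := by
    calc ∑ k ∈ near, bernstein n k p ≤ near.card * M := by
          simpa only [nsmul_eq_mul] using Finset.sum_le_card_nsmul near _ M fun k _ => hM k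
      _ ≤ (2 * √(n + 1) + 1) * M := by gcongr
      _ ≤ (3 * √(n + 1)) * M := by gcongr; linarith
      _ = 3 * (M * √(n + 1)) := by ring
  have hsum := sum_range_bernstein n p
  rw [← Finset.sum_filter_add_sum_filter_not _ fun k => n + 1 < ((k : ℕ) - n * p : ℝ) ^ 2] at hsum
  linarith [sum_bernstein_far_le n p]

end BinomialProbabilities

section GoldenRatio

/-- The number `φ⁻¹` as a point of the unit interval: the success probability of the binomial
distributions whose largest probabilities govern `maxocc` of alternating words. -/
noncomputable def invGoldenRatio : I :=
  ⟨φ⁻¹, inv_nonneg.2 Real.goldenRatio_pos.le, inv_le_one_of_one_le₀ Real.one_lt_goldenRatio.le⟩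

lemma coe_invGoldenRatio : (invGoldenRatio : ℝ) = φ⁻¹ := rfl

lemma invGoldenRatio_lt_one : invGoldenRatio < 1 :=
  inv_lt_one_of_one_lt₀ Real.one_lt_goldenRatio

lemma one_sub_inv_goldenRatio : 1 - φ⁻¹ = φ⁻¹ ^ 2 := by
  rw [Real.inv_goldenRatio, neg_sq, Real.goldenConj_sq]
  ring

/-- Both `φ⁻¹` and `1 - φ⁻¹ = φ⁻²` are powers of `φ`, and the powers of `φ` in
`φ⁻¹ ^ k * (1 - φ⁻¹) ^ (n - k)` add up to `-(2 n - k)`. -/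
lemma choose_eq_bernstein_mul_goldenRatio_pow (n k : ℕ) :
    (n.choose k : ℝ) = bernstein n k invGoldenRatio * φ ^ (2 * n - k) := by
  obtain hk | hk := lt_or_ge n k
  · rw [bernstein_eq_zero_of_lt hk, Nat.choose_eq_zero_of_lt hk]
    simp
  obtain ⟨d, rfl⟩ := Nat.exists_eq_add_of_le hk
  have := Real.goldenRatio_ne_zero
  rw [bernstein_apply, coe_invGoldenRatio, one_sub_inv_goldenRatio, Nat.add_sub_cancel_left,
    show 2 * (k + d) - k = k + 2 * d by omega, pow_add, pow_mul]
  simp only [inv_pow]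
  field_simp

lemma one_eighth_le_invGoldenRatio_mul_one_sub :
    (1 / 8 : ℝ) ≤ invGoldenRatio * (1 - invGoldenRatio) := by
  calc (1 / 8 : ℝ) = 2⁻¹ ^ 3 := by norm_num
    _ ≤ φ⁻¹ ^ 3 := by gcongr; exact Real.goldenRatio_lt_two.le
    _ = invGoldenRatio * (1 - invGoldenRatio) := by
      rw [coe_invGoldenRatio, one_sub_inv_goldenRatio, pow_succ']

end GoldenRatio

section Asymptotics

lemma exists_apply_eq_self_of_monotone {g : ℕ → ℕ} (hg : Monotone g) {N : ℕ} (hN : g N ≤ N) :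
    ∃ n, g n = n := by
  have hex : ∃ n, g n ≤ n := ⟨N, hN⟩
  exact ⟨Nat.find hex, (Nat.find_spec hex).antisymm (Nat.find_min' hex (hg (Nat.find_spec hex)))⟩

variable {α : Type*} [DecidableEq α] {a b : α} {L : ℕ}

lemma maxocc_alternatingWord_mul_sqrt_le (hab : a ≠ b) (L : ℕ) :
    maxocc (alternatingWord a b L) * √L ≤ 12 * φ ^ L := by
  obtain ⟨k, hk⟩ := (isGreatest_maxocc_alternatingWord hab L).1
  set n := (L + k) / 2
  set p := invGoldenRatio
  have hn : (L : ℝ) ≤ 2 * (n + 1) := by exact_mod_cast (show L ≤ 2 * (n + 1) by omega)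
  have hsqrt : √(L : ℝ) ≤ 4 * √((n + 1) * p * (1 - p)) := by
    rw [Real.sqrt_le_left (by positivity), mul_pow,
      Real.sq_sqrt (add_one_mul_mul_one_sub_nonneg n p)]
    nlinarith [one_eighth_le_invGoldenRatio_mul_one_sub]
  have hpow : φ ^ (2 * n - k) ≤ φ ^ L :=
    pow_le_pow_right₀ Real.one_lt_goldenRatio.le (by omega)
  calc maxocc (alternatingWord a b L) * √L
      = φ ^ (2 * n - k) * (bernstein n k invGoldenRatio * √L) := by
        rw [← hk, choose_eq_bernstein_mul_goldenRatio_pow]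
        ring
    _ ≤ φ ^ L * (bernstein n k invGoldenRatio * (4 * √((n + 1) * p * (1 - p)))) := by gcongr
    _ ≤ φ ^ L * (4 * 3) := by
        rw [mul_left_comm _ 4]
        gcongr
        exact bernstein_mul_sqrt_le invGoldenRatio_lt_one n k
    _ = 12 * φ ^ L := by ring

/-- If `n = ⌊(L + k) / 2⌋` where `k` is the mode for `n`, then `2 n - k` is `L` or `L - 1`. -/
lemma goldenRatio_pow_le_maxocc_alternatingWord_mul_sqrt (hab : a ≠ b) (hL : L ≠ 0) :
    φ ^ L ≤ 16 * (maxocc (alternatingWord a b L) * √L) := by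
  obtain ⟨n, hn⟩ : ∃ n, (L + binomialMode n invGoldenRatio) / 2 = n := by
    refine exists_apply_eq_self_of_monotone (N := L) (fun _ _ h => ?_) ?_
    · gcongr
      exact binomialMode_mono invGoldenRatio h
    · have := binomialMode_le L invGoldenRatio_lt_one
      omega
  have hmode := binomialMode_le n invGoldenRatio_lt_one
  set k := binomialMode n invGoldenRatio
  have hweight := one_le_mul_sqrt_of_forall_bernstein_le
    (bernstein_le_bernstein_binomialMode invGoldenRatio_lt_one n)
  have hchoose : n.choose k ≤ maxocc (alternatingWord a b L) :=
    (isGreatest_maxocc_alternatingWord hab L).2 ⟨k, by dsimp only; rw [hn]⟩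
  have hsqrt : √((n : ℝ) + 1) ≤ 2 * √L := by
    rw [Real.sqrt_le_left (by positivity), mul_pow, Real.sq_sqrt (by positivity)]
    exact_mod_cast (show n + 1 ≤ 2 ^ 2 * L by omega)
  calc φ ^ L ≤ φ * φ ^ (2 * n - k) := by
        rw [← pow_succ']
        exact pow_le_pow_right₀ Real.one_lt_goldenRatio.le (by omega)
    _ ≤ 2 * φ ^ (2 * n - k) := by gcongr; exact Real.goldenRatio_lt_two.le
    _ ≤ 2 * φ ^ (2 * n - k) * (4 * (bernstein n k invGoldenRatio * √(n + 1))) :=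
        le_mul_of_one_le_right (by positivity) hweight
    _ = 8 * (n.choose k * √(n + 1)) := by
        rw [choose_eq_bernstein_mul_goldenRatio_pow]
        ring
    _ ≤ 8 * (maxocc (alternatingWord a b L) * (2 * √L)) := by gcongr
    _ = 16 * (maxocc (alternatingWord a b L) * √L) := by ring

lemma abs_logb_maxocc_alternatingWord_sub_le (hab : a ≠ b) (hL : L ≠ 0) :
    |Real.logb 2 (maxocc (alternatingWord a b L)) -
      (L * Real.logb 2 φ - 1 / 2 * Real.logb 2 L)| ≤ 4 := by
  have hupper := maxocc_alternatingWord_mul_sqrt_le hab L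
  have hlower := goldenRatio_pow_le_maxocc_alternatingWord_mul_sqrt hab hL
  set A : ℝ := ↑(maxocc (alternatingWord a b L))
  have hpow : 0 < φ ^ L := by positivity
  have hprod : 0 < A * √L := by linarith
  have hL0 : (0 : ℝ) < L := by exact_mod_cast hL.bot_lt
  have hlog : Real.logb 2 A - (L * Real.logb 2 φ - 1 / 2 * Real.logb 2 L) =
      Real.logb 2 (A * √L / φ ^ L) := by
    rw [Real.logb_div hprod.ne' hpow.ne',
      Real.logb_mul (left_ne_zero_of_mul hprod.ne') (by positivity), Real.logb_pow,
      Real.sqrt_eq_rpow, Real.logb_rpow_eq_mul_logb_of_pos hL0]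
    ring
  have hratio : 0 < A * √L / φ ^ L := by positivity
  rw [hlog, abs_le, Real.le_logb_iff_rpow_le one_lt_two hratio,
    Real.logb_le_iff_le_rpow one_lt_two hratio, le_div_iff₀ hpow, div_le_iff₀ hpow,
    Real.rpow_neg two_pos.le, show (2 : ℝ) ^ (4 : ℝ) = 16 by norm_num]
  constructor <;> linarith

end Asymptotics

theorem stmt_14_general {α : Type*} [DecidableEq α] {a b : α} (hab : a ≠ b) :
    ∃ C : ℝ, ∀ m : ℕ, 1 ≤ m →
      |Real.logb 2 (maxocc (rep [a, b] m)) -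
        ((m : ℝ) * Real.logb 2 ((3 + Real.sqrt 5) / 2) - (1 / 2) * Real.logb 2 m)| ≤ C := by
  refine ⟨4 + 1 / 2, fun m hm => ?_⟩
  have hm0 : (m : ℝ) ≠ 0 := by exact_mod_cast (show m ≠ 0 by omega)
  have hbase : (3 + √5) / 2 = φ ^ 2 := by
    rw [Real.goldenRatio_sq, Real.goldenRatio]
    ring
  have hword := abs_logb_maxocc_alternatingWord_sub_le (L := 2 * m) hab (by omega)
  rw [← rep_eq_alternatingWord, Nat.cast_mul, Nat.cast_two, Real.logb_mul two_ne_zero hm0,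
    Real.logb_self_eq_one one_lt_two] at hword
  rw [hbase, Real.logb_pow, Nat.cast_two]
  rw [abs_le] at hword ⊢
  constructor <;> linarith

theorem stmt_14 :
    ∃ C : ℝ, ∀ m : ℕ, 1 ≤ m →
      |Real.logb 2 (maxocc (rep ([0, 1] : List (Fin 2)) m)) -
        ((m : ℝ) * Real.logb 2 ((3 + Real.sqrt 5) / 2) - (1 / 2) * Real.logb 2 m)| ≤ C :=
  stmt_14_general zero_ne_one
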